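/- Under Assumption 1, if Z is uniformly distributed on S², then for every x ∈ S² and every L ≥ 1 the kernel u(x,y) = ∑_{l=1}^{L} ∑_{m=−l}^{l} Φ_{lm}(x) conj(Φ_{lm}(y)) satisfies E_{f₀}[ |u(Z,x)|² ] ≤ (√3 d₀^{−4} / (π (4ν + 5/2))) (L+1)^{4ν + 5/2}. -/

import Mathlib

/-! The kernel `z ↦ u(z, x)` is a linear combination `∑_{l,n} c_{ln} conj (Y^l_n(z))` with
`c_l = (Ainv l)ᵀ conj(Φ_l(x))`. By orthonormality its second moment under the uniform law is
`(4π)⁻¹ ∑ |c_{ln}|²` (`integral_norm_sq_comb`). A matrix and its transpose have the same operator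
norm (`OpNormLE.transpose`), so two applications of the bound on `Ainv l`, one for `Φ_l(x)` and one
for `c_l`, together with the pointwise bound on `∑ |Y^l_m|²`, give
`∑_n |c_{ln}|² ≤ d₀⁻⁴ l^{4ν} (2l+1)/(4π)`. Finally `l^{4ν} (2l+1) ≤ 3 l^{p-1}` with `p = 4ν + 5/2`,
and `∑_{l ≤ L} l^{p-1} ≤ (L+1)^p / p` by Bernoulli's inequality (`sum_rpow_le`); the remaining
numerical comparison is `3 / (16π²) ≤ √3 / π`. -/

noncomputable section

open MeasureTheory Filter Finset Real

namespace SphericalTest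

/-- The index set `{-l, …, l}` of spherical harmonic orders at degree `l`. -/
def Idx (l : ℕ) : Finset ℤ := Finset.Icc (-(l : ℤ)) (l : ℤ)

/-- `OpNormLE l A c` : the operator norm of the matrix `A` acting on the span of
`{Y^l_m : m ∈ Idx l}` (identified with vectors indexed by `Idx l`) is at most `c`. -/
def OpNormLE (l : ℕ) (A : ℤ → ℤ → ℂ) (c : ℝ) : Prop :=
  ∀ h : ℤ → ℂ,
    ∑ m ∈ Idx l, ‖∑ n ∈ Idx l, A m n * h n‖ ^ 2 ≤ c ^ 2 * ∑ n ∈ Idx l, ‖h n‖ ^ 2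

/-- `Ainv l` is the (two-sided) inverse of the matrix `A l` on the index block `Idx l`. -/
def IsInvPair (A Ainv : ℕ → ℤ → ℤ → ℂ) : Prop :=
  ∀ l : ℕ, ∀ m ∈ Idx l, ∀ n ∈ Idx l,
    (∑ k ∈ Idx l, A l m k * Ainv l k n) = (if m = n then 1 else 0) ∧
    (∑ k ∈ Idx l, Ainv l m k * A l k n) = (if m = n then 1 else 0)

/-- Assumption 1 (ordinary smooth noise of order ν): the rotational Fourier matrices
`A l = f_ε^{⋆l}` are invertible with inverse `Ainv l`, and for `l ≥ 1`,
`‖(f_ε^{⋆l})⁻¹‖_op ≤ d₀⁻¹ l^ν` and `‖f_ε^{⋆l}‖_op ≤ d₁ l^{-ν}`. -/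
def Assumption1 (A Ainv : ℕ → ℤ → ℤ → ℂ) (d0 d1 ν : ℝ) : Prop :=
  0 < d0 ∧ 0 < d1 ∧ 0 < ν ∧ IsInvPair A Ainv ∧
    (∀ l : ℕ, 1 ≤ l → OpNormLE l (Ainv l) (d0⁻¹ * (l : ℝ) ^ ν)) ∧
    (∀ l : ℕ, 1 ≤ l → OpNormLE l (A l) (d1 * (l : ℝ) ^ (-ν)))

/-- Assumption 2 (super smooth noise): `‖(f_ε^{⋆l})⁻¹‖_op ≤ d₀⁻¹ l^{-ν₀} exp(l^β/δ)` and
`‖f_ε^{⋆l}‖_op ≤ d₁ l^{ν₁} exp(-l^β/δ)`. -/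
def Assumption2 (A Ainv : ℕ → ℤ → ℤ → ℂ) (d0 d1 ν0 ν1 δ β : ℝ) : Prop :=
  ν1 ≤ ν0 ∧ 0 < d0 ∧ 0 < d1 ∧ 0 < δ ∧ 0 < β ∧ IsInvPair A Ainv ∧
    (∀ l : ℕ, 1 ≤ l →
      OpNormLE l (Ainv l) (d0⁻¹ * (l : ℝ) ^ (-ν0) * Real.exp ((l : ℝ) ^ β / δ))) ∧
    (∀ l : ℕ, 1 ≤ l →
      OpNormLE l (A l) (d1 * (l : ℝ) ^ ν1 * Real.exp (-((l : ℝ) ^ β) / δ)))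

variable {Ω : Type*} [MeasurableSpace Ω]

/-- `Φ_{lm}(x) = ∑_{n=-l}^{l} ((f_ε^{⋆l})⁻¹)_{mn} conj(Y^l_n(x))`. -/
def Phi (Ainv : ℕ → ℤ → ℤ → ℂ) (Y : ℕ → ℤ → Ω → ℂ) (l : ℕ) (m : ℤ) (x : Ω) : ℂ :=
  ∑ n ∈ Idx l, Ainv l m n * star (Y l n x)

/-- Ordered pairs `i₁ < i₂` of observation indices. -/
def pairs (N : ℕ) : Finset (Fin N × Fin N) := Finset.univ.filter fun p => p.1 < p.2

/-- The test statistic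
`T_L = (2/(N(N-1))) ∑_{l=1}^{L} ∑_{m=-l}^{l} ∑_{i₁<i₂} Φ_{lm}(Z_{i₁}) conj(Φ_{lm}(Z_{i₂}))`. -/
def TL (Ainv : ℕ → ℤ → ℤ → ℂ) (Y : ℕ → ℤ → Ω → ℂ) (N L : ℕ) (Z : Fin N → Ω) : ℂ :=
  (2 / ((N : ℂ) * ((N : ℂ) - 1))) *
    ∑ l ∈ Finset.Icc 1 L, ∑ m ∈ Idx l, ∑ p ∈ pairs N,
      Phi Ainv Y l m (Z p.1) * star (Phi Ainv Y l m (Z p.2))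

/-- The uniform density `f₀ = (4π)⁻¹` on the sphere. -/
def f0 : Ω → ℝ := fun _ => (4 * π)⁻¹

/-- A probability density with respect to the measure `μ` (the surface measure on `S²`). -/
def IsDensity (μ : Measure Ω) (f : Ω → ℝ) : Prop :=
  Measurable f ∧ (∀ x, 0 ≤ f x) ∧ ∫ x, f x ∂μ = 1

/-- The law of one observation whose density w.r.t. `μ` is `f`. -/
def law (μ : Measure Ω) (f : Ω → ℝ) : Measure Ω :=
  μ.withDensity fun x => ENNReal.ofReal (f x)

/-- The joint law of `N` i.i.d. observations with density `f`. -/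
def lawN (μ : Measure Ω) (N : ℕ) (f : Ω → ℝ) : Measure (Fin N → Ω) :=
  Measure.pi fun _ => law μ f

/-- Spherical Fourier coefficient `f^{⋆l}_m = ∫ f(x) conj(Y^l_m(x)) dx`. -/
def coef (μ : Measure Ω) (Y : ℕ → ℤ → Ω → ℂ) (f : Ω → ℝ) (l : ℕ) (m : ℤ) : ℂ :=
  ∫ x, (f x : ℂ) * star (Y l m x) ∂μ

/-- Membership in the Sobolev ball `W_s(S², R)`:
`f` is a density and `∑_{l,m} (1+l(l+1))^s |f^{⋆l}_m|² ≤ (4π)⁻¹ + R²`. -/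
def InW (μ : Measure Ω) (Y : ℕ → ℤ → Ω → ℂ) (s R : ℝ) (f : Ω → ℝ) : Prop :=
  IsDensity μ f ∧
    ∑' l : ℕ, ∑ m ∈ Idx l,
        ENNReal.ofReal ((1 + (l : ℝ) * ((l : ℝ) + 1)) ^ s * ‖coef μ Y f l m‖ ^ 2)
      ≤ ENNReal.ofReal ((4 * π)⁻¹ + R ^ 2)

/-- Squared L² distance to the uniform density: `‖f - f₀‖₂²`. -/
def dist2 (μ : Measure Ω) (f : Ω → ℝ) : ℝ := ∫ x, (f x - (4 * π)⁻¹) ^ 2 ∂μ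

/-- The alternative `H₁(s, R, ε)`: densities `f ∈ W_s(S², R)` with `‖f - f₀‖₂² ≥ ε`. -/
def H1set (μ : Measure Ω) (Y : ℕ → ℤ → Ω → ℂ) (s R eps : ℝ) : Set (Ω → ℝ) :=
  {f | InW μ Y s R f ∧ eps ≤ dist2 μ f}

/-- Spherical convolution `(f_ε * f)(ω) = ∫_{SO(3)} f_ε(u) f(u⁻¹ ω) du`. -/
def conv {G : Type*} [Group G] [MeasurableSpace G] [MulAction G Ω]
    (haar : Measure G) (fe : G → ℝ) (f : Ω → ℝ) (ω : Ω) : ℝ :=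
  ∫ u, fe u * f (u⁻¹ • ω) ∂haar

/-- The transpose of a matrix satisfies the same operator norm bound. With `w = Aᵀ g`, exchanging
the sums gives `‖w‖² = ∑ gₘ (A conj w)ₘ ≤ ‖g‖ c ‖w‖`. -/
lemma OpNormLE.transpose {l : ℕ} {B : ℤ → ℤ → ℂ} {c : ℝ} (hB : OpNormLE l B c) (g : ℤ → ℂ) :
    ∑ n ∈ Idx l, ‖∑ m ∈ Idx l, B m n * g m‖ ^ 2 ≤ c ^ 2 * ∑ m ∈ Idx l, ‖g m‖ ^ 2 := by
  set w : ℤ → ℂ := fun n => ∑ m ∈ Idx l, B m n * g m with hw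
  change ∑ n ∈ Idx l, ‖w n‖ ^ 2 ≤ _
  set S := ∑ n ∈ Idx l, ‖w n‖ ^ 2 with hS
  set G := ∑ m ∈ Idx l, ‖g m‖ ^ 2 with hG
  have hS0 : 0 ≤ S := Finset.sum_nonneg fun _ _ => by positivity
  have hG0 : 0 ≤ G := Finset.sum_nonneg fun _ _ => by positivity
  set v : ℤ → ℂ := fun m => ∑ n ∈ Idx l, B m n * star (w n) with hv
  have h1 : (S : ℂ) = ∑ m ∈ Idx l, g m * v m := by
    have : (S : ℂ) = ∑ n ∈ Idx l, w n * star (w n) := by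
      rw [hS]
      push_cast
      refine Finset.sum_congr rfl fun n _ => ?_
      exact (Complex.mul_conj' (w n)).symm
    rw [this]
    simp only [hv, Finset.mul_sum]
    rw [Finset.sum_comm]
    refine Finset.sum_congr rfl fun n _ => ?_
    conv_lhs => rw [hw]
    simp only [Finset.sum_mul]
    exact Finset.sum_congr rfl fun m _ => by ring
  have h2 : S ≤ ∑ m ∈ Idx l, ‖g m‖ * ‖v m‖ := by
    calc S = ‖(S : ℂ)‖ := by rw [Complex.norm_real, Real.norm_of_nonneg hS0]
      _ ≤ _ := by
        rw [h1]
        refine (norm_sum_le _ _).trans (le_of_eq ?_)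
        simp
  have h3 : ∑ m ∈ Idx l, ‖v m‖ ^ 2 ≤ c ^ 2 * S := by
    have := hB fun n => star (w n)
    simpa [hv, hS] using this
  have h4 : S ^ 2 ≤ G * (c ^ 2 * S) :=
    calc S ^ 2 ≤ (∑ m ∈ Idx l, ‖g m‖ * ‖v m‖) ^ 2 := by gcongr
      _ ≤ G * ∑ m ∈ Idx l, ‖v m‖ ^ 2 := Finset.sum_mul_sq_le_sq_mul_sq _ _ _
      _ ≤ _ := by gcongr
  rcases hS0.eq_or_lt with h | h
  · rw [← h]; positivity
  · refine le_of_mul_le_mul_right ?_ h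
    nlinarith

/-- Parseval's identity for a finite combination of bounded orthonormal functions; boundedness
and finiteness of the measure provide integrability of the products. -/
lemma integral_norm_sq_comb {Ω ι : Type*} [MeasurableSpace Ω] [DecidableEq ι] (μ : Measure Ω)
    [IsFiniteMeasure μ] (s : Finset ι) (φ : ι → Ω → ℂ) (hm : ∀ i, Measurable (φ i))
    (K : ι → ℝ) (hK : ∀ i ∈ s, ∀ x, ‖φ i x‖ ≤ K i)
    (ho : ∀ i ∈ s, ∀ j ∈ s, ∫ x, φ i x * star (φ j x) ∂μ = if i = j then 1 else 0)
    (c : ι → ℂ) :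
    ∫ x, ‖∑ i ∈ s, c i * star (φ i x)‖ ^ 2 ∂μ = ∑ i ∈ s, ‖c i‖ ^ 2 := by
  have hint : ∀ i ∈ s, ∀ j ∈ s, Integrable (fun x => φ i x * star (φ j x)) μ := by
    intro i hi j hj
    refine Integrable.of_bound (C := K i * K j) ?_ (Eventually.of_forall fun x => ?_)
    · exact ((hm i).mul (continuous_star.measurable.comp (hm j))).aestronglyMeasurable
    · rw [norm_mul, norm_star]
      exact mul_le_mul (hK i hi x) (hK j hj x) (norm_nonneg _)
        ((norm_nonneg _).trans (hK i hi x))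
  have hexp : ∀ x, ((‖∑ i ∈ s, c i * star (φ i x)‖ ^ 2 : ℝ) : ℂ)
      = ∑ i ∈ s, ∑ j ∈ s, (c i * star (c j)) * (φ j x * star (φ i x)) := by
    intro x
    push_cast
    rw [← Complex.mul_conj', map_sum, Finset.sum_mul_sum]
    refine Finset.sum_congr rfl fun i _ => Finset.sum_congr rfl fun j _ => ?_
    simp
    ring
  apply Complex.ofReal_injective
  rw [← integral_complex_ofReal]
  simp_rw [hexp]
  rw [integral_finsetSum _ fun i hi => integrable_finsetSum _ fun j hj =>
    (hint j hj i hi).const_mul _]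
  push_cast
  refine Finset.sum_congr rfl fun i hi => ?_
  rw [integral_finsetSum _ fun j hj => (hint j hj i hi).const_mul _]
  calc _ = ∑ j ∈ s, (c i * star (c j)) * (if j = i then 1 else 0) := by
        refine Finset.sum_congr rfl fun j hj => ?_
        rw [integral_const_mul, ho j hj i hi]
    _ = _ := by
        simp only [mul_ite, mul_one, mul_zero, Finset.sum_ite_eq', hi, if_true]
        exact Complex.mul_conj' _

/-- Discrete comparison of `∑ l^{p-1}` with `∫ t^{p-1} dt`. -/
lemma sum_rpow_le {p : ℝ} (hp : 1 ≤ p) (L : ℕ) :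
    p * ∑ l ∈ Finset.Icc 1 L, (l : ℝ) ^ (p - 1) ≤ ((L : ℝ) + 1) ^ p := by
  induction L with
  | zero => simp
  | succ n ih =>
    rw [Finset.sum_Icc_succ_top (by omega), mul_add]
    push_cast
    set y : ℝ := (n : ℝ) + 1 with hy
    have hy0 : 0 < y := by positivity
    have hb : 1 + p * y⁻¹ ≤ (1 + y⁻¹) ^ p :=
      one_add_mul_self_le_rpow_one_add (by have := inv_pos.2 hy0; linarith) hp
    have h1 : (y + 1) ^ p = y ^ p * (1 + y⁻¹) ^ p := by
      rw [← Real.mul_rpow hy0.le (by positivity)]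
      congr 1
      field_simp
    have h2 : y ^ (p - 1) = y ^ p * y⁻¹ := by
      rw [Real.rpow_sub_one hy0.ne', div_eq_mul_inv]
    have h3 : 0 ≤ y ^ p := by positivity
    rw [h1, h2]
    nlinarith [mul_le_mul_of_nonneg_left hb h3]

/-- **Second moment of the kernel under the uniform law (bound B).**
Under Assumption 1, if `Z` is uniform on `S²`, then for every `x ∈ S²` and `L ≥ 1` the
kernel `u(x,y) = ∑_{l=1}^{L} ∑_m Φ_{lm}(x) conj(Φ_{lm}(y))` satisfies
`E_{f₀}[|u(Z,x)|²] ≤ (√3 d₀⁻⁴/(π(4ν+5/2))) (L+1)^{4ν+5/2}`. -/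
theorem statement10
    {Ω : Type*} [MeasurableSpace Ω]
    (μ : Measure Ω) (Y : ℕ → ℤ → Ω → ℂ) (A Ainv : ℕ → ℤ → ℤ → ℂ)
    (hμ : μ Set.univ = ENNReal.ofReal (4 * π))
    (hYmeas : ∀ l m, Measurable (Y l m))
    (hYorth : ∀ l₁ : ℕ, ∀ m₁ ∈ Idx l₁, ∀ l₂ : ℕ, ∀ m₂ ∈ Idx l₂,
      ∫ x, Y l₁ m₁ x * star (Y l₂ m₂ x) ∂μ = if l₁ = l₂ ∧ m₁ = m₂ then 1 else 0)
    (hYadd : ∀ (l : ℕ) (x : Ω), ∑ m ∈ Idx l, ‖Y l m x‖ ^ 2 ≤ (2 * (l : ℝ) + 1) / (4 * π))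
    (d0 d1 ν : ℝ) (hA1 : Assumption1 A Ainv d0 d1 ν) :
    ∀ L : ℕ, 1 ≤ L → ∀ x : Ω,
      (∫ z, ‖∑ l ∈ Finset.Icc 1 L, ∑ m ∈ Idx l,
          Phi Ainv Y l m z * star (Phi Ainv Y l m x)‖ ^ 2 ∂(law μ f0))
        ≤ Real.sqrt 3 * d0⁻¹ ^ 4 / (π * (4 * ν + 5 / 2)) * ((L : ℝ) + 1) ^ (4 * ν + 5 / 2) := by
  obtain ⟨hd0, -, hν, -, hinv, -⟩ := hA1
  intro L _ x
  have : IsFiniteMeasure μ := ⟨by rw [hμ]; exact ENNReal.ofReal_lt_top⟩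
  set c : (Σ _ : ℕ, ℤ) → ℂ :=
    fun i => ∑ m ∈ Idx i.1, Ainv i.1 m i.2 * star (Phi Ainv Y i.1 m x) with hc
  set s : Finset (Σ _ : ℕ, ℤ) := (Finset.Icc 1 L).sigma Idx with hs
  have hu : ∀ z, ∑ l ∈ Finset.Icc 1 L, ∑ m ∈ Idx l,
      Phi Ainv Y l m z * star (Phi Ainv Y l m x) = ∑ i ∈ s, c i * star (Y i.1 i.2 z) := by
    intro z
    rw [hs, Finset.sum_sigma]
    refine Finset.sum_congr rfl fun l _ => ?_
    simp only [hc, Finset.sum_mul]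
    rw [Finset.sum_comm]
    refine Finset.sum_congr rfl fun m _ => ?_
    conv_lhs => rw [Phi]
    rw [Finset.sum_mul]
    exact Finset.sum_congr rfl fun n _ => by ring
  simp_rw [hu]
  have hlaw : law μ f0 = ENNReal.ofReal (4 * π)⁻¹ • μ := by
    unfold law f0
    exact withDensity_const _
  have hparseval : ∫ z, ‖∑ i ∈ s, c i * star (Y i.1 i.2 z)‖ ^ 2 ∂μ = ∑ i ∈ s, ‖c i‖ ^ 2 := by
    refine integral_norm_sq_comb μ s (fun i => Y i.1 i.2) (fun i => hYmeas _ _)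
      (fun i => Real.sqrt ((2 * (i.1 : ℝ) + 1) / (4 * π))) ?_ ?_ c
    · intro i hi z
      apply Real.le_sqrt_of_sq_le
      refine le_trans ?_ (hYadd i.1 z)
      exact Finset.single_le_sum (f := fun m => ‖Y i.1 m z‖ ^ 2) (fun _ _ => by positivity)
        (Finset.mem_sigma.1 hi).2
    · rintro ⟨l, m⟩ hi ⟨l', m'⟩ hj
      rw [hYorth l m (Finset.mem_sigma.1 hi).2 l' m' (Finset.mem_sigma.1 hj).2]
      simp
  set p : ℝ := 4 * ν + 5 / 2 with hp
  have hp1 : 1 ≤ p := by linarith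
  have hcoef : ∀ l ∈ Finset.Icc 1 L,
      ∑ n ∈ Idx l, ‖c ⟨l, n⟩‖ ^ 2 ≤ 3 * d0⁻¹ ^ 4 / (4 * π) * (l : ℝ) ^ (p - 1) := by
    intro l hl
    have hl1 : 1 ≤ l := (Finset.mem_Icc.1 hl).1
    have hl1' : (1 : ℝ) ≤ l := by exact_mod_cast hl1
    have hl0 : (0 : ℝ) < l := by linarith
    have hPhi : ∑ m ∈ Idx l, ‖Phi Ainv Y l m x‖ ^ 2
        ≤ (d0⁻¹ * (l : ℝ) ^ ν) ^ 2 * ((2 * (l : ℝ) + 1) / (4 * π)) := by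
      refine (hinv l hl1 fun n => star (Y l n x)).trans ?_
      simp only [norm_star]
      gcongr
      exact hYadd l x
    have hrow := (hinv l hl1).transpose fun m => star (Phi Ainv Y l m x)
    simp only [norm_star] at hrow
    have hpow : ((l : ℝ) ^ ν) ^ 4 = (l : ℝ) ^ (4 * ν) := by
      rw [← Real.rpow_natCast, ← Real.rpow_mul hl0.le]
      congr 1
      push_cast
      ring
    have hle : (l : ℝ) ^ (4 * ν) * l ≤ (l : ℝ) ^ (p - 1) := by
      rw [← Real.rpow_add_one hl0.ne']
      exact Real.rpow_le_rpow_of_exponent_le hl1' (by linarith)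
    calc ∑ n ∈ Idx l, ‖c ⟨l, n⟩‖ ^ 2
        ≤ (d0⁻¹ * (l : ℝ) ^ ν) ^ 2 * ∑ m ∈ Idx l, ‖Phi Ainv Y l m x‖ ^ 2 := hrow
      _ ≤ (d0⁻¹ * (l : ℝ) ^ ν) ^ 2 *
          ((d0⁻¹ * (l : ℝ) ^ ν) ^ 2 * ((2 * (l : ℝ) + 1) / (4 * π))) := by gcongr
      _ = d0⁻¹ ^ 4 / (4 * π) * ((l : ℝ) ^ (4 * ν) * (2 * (l : ℝ) + 1)) := by
          rw [← hpow]; ring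
      _ ≤ d0⁻¹ ^ 4 / (4 * π) * ((l : ℝ) ^ (4 * ν) * (3 * (l : ℝ))) := by
          gcongr
          linarith
      _ = 3 * d0⁻¹ ^ 4 / (4 * π) * ((l : ℝ) ^ (4 * ν) * l) := by ring
      _ ≤ _ := by gcongr
  have hsum : ∑ i ∈ s, ‖c i‖ ^ 2 ≤ 3 * d0⁻¹ ^ 4 / (4 * π) * (((L : ℝ) + 1) ^ p / p) := by
    rw [hs, Finset.sum_sigma]
    refine (Finset.sum_le_sum hcoef).trans ?_
    rw [← Finset.mul_sum]
    gcongr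
    rw [le_div_iff₀ (by linarith), mul_comm]
    exact sum_rpow_le hp1 L
  have hconst : 3 / (16 * π) ≤ Real.sqrt 3 := by
    have h3 : (1 : ℝ) ≤ Real.sqrt 3 := Real.one_le_sqrt.2 (by norm_num)
    refine le_trans ?_ h3
    rw [div_le_one (by positivity)]
    linarith [Real.pi_gt_three]
  rw [hlaw, integral_smul_measure, hparseval, ENNReal.toReal_ofReal (by positivity), smul_eq_mul]
  have hp0 : 0 < p := by linarith
  calc (4 * π)⁻¹ * ∑ i ∈ s, ‖c i‖ ^ 2
      ≤ (4 * π)⁻¹ * (3 * d0⁻¹ ^ 4 / (4 * π) * (((L : ℝ) + 1) ^ p / p)) := by gcongr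
    _ = 3 / (16 * π) * (d0⁻¹ ^ 4 / (π * p) * ((L : ℝ) + 1) ^ p) := by
        field_simp
        ring
    _ ≤ Real.sqrt 3 * (d0⁻¹ ^ 4 / (π * p) * ((L : ℝ) + 1) ^ p) := by gcongr
    _ = _ := by ring

end SphericalTest
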